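/- Let G be a simple graph of order n ≥ 2 with e(G) edges. Then the Q-index satisfies q(G) ≤ 2e(G)/(n−1) + n − 2. -/

import Mathlib

open Finset Matrix

/-- The signless Laplacian matrix `Q(G) = D(G) + A(G)` of a graph. -/
noncomputable def signlessLaplacian {V : Type*} [Fintype V] [DecidableEq V]
    (G : SimpleGraph V) [DecidableRel G.Adj] : Matrix V V ℝ :=
  Matrix.diagonal (fun v => (G.degree v : ℝ)) + G.adjMatrix ℝ

/-- The Q-index (largest eigenvalue of the signless Laplacian). -/
noncomputable def qIndex {V : Type*} [Fintype V] [DecidableEq V]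
    (G : SimpleGraph V) [DecidableRel G.Adj] : ℝ :=
  sSup {μ : ℝ | ∃ x : V → ℝ, x ≠ 0 ∧ signlessLaplacian G *ᵥ x = μ • x}

/-- The adjacency spectral radius (largest eigenvalue of the adjacency matrix). -/
noncomputable def adjSpecRad {V : Type*} [Fintype V] [DecidableEq V]
    (G : SimpleGraph V) [DecidableRel G.Adj] : ℝ :=
  sSup {μ : ℝ | ∃ x : V → ℝ, x ≠ 0 ∧ G.adjMatrix ℝ *ᵥ x = μ • x}

/-- A graph is `k`-path-coverable if its vertex set can be covered by at most `k`
vertex-disjoint paths. -/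
def PathCoverable {V : Type*} (G : SimpleGraph V) (k : ℕ) : Prop :=
  ∃ (m : ℕ) (P : Fin m → Σ (u : V) (v : V), G.Walk u v),
    m ≤ k ∧
    (∀ i, (P i).2.2.IsPath) ∧
    (∀ v : V, ∃ i, v ∈ (P i).2.2.support) ∧
    (∀ i j, i ≠ j → ∀ v, v ∈ (P i).2.2.support → v ∉ (P j).2.2.support)

/-- A graph is traceable if it has a Hamilton path. -/
def Traceable {V : Type*} (G : SimpleGraph V) : Prop :=
  ∃ (u v : V) (p : G.Walk u v), p.IsPath ∧ ∀ w, w ∈ p.support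

/-- `B(n,k,δ) = K_δ ∨ (K_{n-2δ-k} ∪ complement K_{δ+k})`: the first `δ` vertices form the
dominating clique `Y`, the next `n-2δ-k` vertices form the clique `Z`, and the
last `δ+k` vertices form the independent set `X`. -/
def Bgraph (n k δ : ℕ) : SimpleGraph (Fin n) where
  Adj i j := i ≠ j ∧ ((i : ℕ) < δ ∨ (j : ℕ) < δ ∨
      ((i : ℕ) < n - (δ + k) ∧ (j : ℕ) < n - (δ + k)))
  symm := by
    constructor
    rintro i j ⟨hne, h⟩
    exact ⟨hne.symm, by tauto⟩
  loopless := by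
    constructor
    rintro i ⟨h, -⟩
    exact h rfl

instance (n k δ : ℕ) : DecidableRel (Bgraph n k δ).Adj := fun i j =>
  inferInstanceAs (Decidable (i ≠ j ∧ ((i : ℕ) < δ ∨ (j : ℕ) < δ ∨
      ((i : ℕ) < n - (δ + k) ∧ (j : ℕ) < n - (δ + k)))))

instance {n : ℕ} (G : SimpleGraph (Fin n)) [DecidableRel G.Adj]
    (E' : Finset (Sym2 (Fin n))) : DecidableRel (G.deleteEdges ↑E').Adj := fun a b =>
  decidable_of_iff (G.Adj a b ∧ s(a, b) ∉ E') (by simp)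

/-- The edge set `E₁` of `B(n,k,δ)`: edges with both endpoints in `Y ∪ Z`. -/
def IsE1Edge (n k δ : ℕ) (e : Sym2 (Fin n)) : Prop :=
  e ∈ (Bgraph n k δ).edgeSet ∧ ∀ v ∈ e, (v : ℕ) < n - (δ + k)

/-- The family `𝓑₁(n,k,δ)`, up to isomorphism. -/
def InB1 (n k δ : ℕ) (G : SimpleGraph (Fin n)) : Prop :=
  ∃ E' : Finset (Sym2 (Fin n)),
    (∀ e ∈ E', IsE1Edge n k δ e) ∧ E'.card ≤ δ * (δ + k) / 4 ∧
    Nonempty (G ≃g (Bgraph n k δ).deleteEdges ↑E')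

/-- The family `𝓑₂(n,k,δ)`, up to isomorphism. -/
def InB2 (n k δ : ℕ) (G : SimpleGraph (Fin n)) : Prop :=
  ∃ E' : Finset (Sym2 (Fin n)),
    (∀ e ∈ E', IsE1Edge n k δ e) ∧ E'.card = δ * (δ + k) / 4 + 1 ∧
    Nonempty (G ≃g (Bgraph n k δ).deleteEdges ↑E')

/-!
A Collatz–Wielandt comparison with the degrees as weights (Merris) gives
`q(G) ≤ max (d u + m u)`, where `m u` is the average degree of the neighbours of `u`.
To bound `d u + m u`, put `d = d u`, `k = n - 1 - d`, and let `E` be the number of edges leaving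
the closed neighbourhood of `u`. The degrees of the neighbours of `u` sum to at most `d ^ 2 + E`,
those of the non-neighbours to at least `E`, and, as `0 ≤ E ≤ d * k`, the claimed inequality
reduces to `E * (k - d) ≤ d * k * (k - 1)`.
-/

section Eigenvalue

lemma abs_mulVec_le_mulVec_abs {m n R : Type*} [Fintype n] [Ring R] [LinearOrder R]
    [IsOrderedRing R] {A : Matrix m n R} (hA : ∀ i j, 0 ≤ A i j) (x : n → R) (i : m) :
    |(A *ᵥ x) i| ≤ (A *ᵥ fun j => |x j|) i :=
  (abs_sum_le_sum_abs _ _).trans_eq <|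
    sum_congr rfl fun j _ => by rw [abs_mul, abs_of_nonneg (hA i j)]

variable {ι K : Type*} [Field K] [LinearOrder K] [IsStrictOrderedRing K]

lemma exists_abs_le_mul_of_pos [Finite ι] [Nonempty ι] {w : ι → K} (hw : ∀ i, 0 < w i) (x : ι → K) :
    ∃ c i, |x i| = c * w i ∧ ∀ j, |x j| ≤ c * w j := by
  obtain ⟨i, hi⟩ := Finite.exists_max fun j => |x j| / w j
  exact ⟨|x i| / w i, i, (div_mul_cancel₀ _ (hw i).ne').symm,
    fun j => (div_le_iff₀ (hw j)).1 (hi j)⟩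

lemma abs_eigenvalue_le_of_mulVec_le [Fintype ι] {A : Matrix ι ι K} (hA : ∀ i j, 0 ≤ A i j)
    {w : ι → K} (hw : ∀ i, 0 < w i) {b : K} (hb : ∀ i, (A *ᵥ w) i ≤ b * w i)
    {μ : K} {x : ι → K} (hx : x ≠ 0) (hμ : A *ᵥ x = μ • x) : |μ| ≤ b := by
  obtain ⟨k, hk⟩ := Function.ne_iff.1 hx
  have : Nonempty ι := ⟨k⟩
  obtain ⟨c, i, hi, hle⟩ := exists_abs_le_mul_of_pos hw x
  have hc : 0 < c := pos_of_mul_pos_left ((abs_pos.2 hk).trans_le (hle k)) (hw k).le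
  refine le_of_mul_le_mul_right ?_ (mul_pos hc (hw i))
  calc |μ| * (c * w i) = |(A *ᵥ x) i| := by rw [← hi, hμ, Pi.smul_apply, smul_eq_mul, abs_mul]
    _ ≤ (A *ᵥ fun j => |x j|) i := abs_mulVec_le_mulVec_abs hA x i
    _ ≤ (A *ᵥ (c • w)) i := dotProduct_le_dotProduct_of_nonneg_left hle (hA i)
    _ = c * (A *ᵥ w) i := by rw [mulVec_smul, Pi.smul_apply, smul_eq_mul]
    _ ≤ c * (b * w i) := by gcongr; exact hb i
    _ = b * (c * w i) := mul_left_comm c b (w i)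

end Eigenvalue

section SignlessLaplacian

variable {V : Type*} [Fintype V] [DecidableEq V] (G : SimpleGraph V) [DecidableRel G.Adj]

lemma signlessLaplacian_mulVec_apply (x : V → ℝ) (u : V) :
    (signlessLaplacian G *ᵥ x) u = G.degree u * x u + ∑ v ∈ G.neighborFinset u, x v := by
  rw [signlessLaplacian, add_mulVec, Pi.add_apply, mulVec_diagonal,
    SimpleGraph.adjMatrix_mulVec_apply]

lemma signlessLaplacian_nonneg (u v : V) : 0 ≤ signlessLaplacian G u v := by
  rw [signlessLaplacian, Matrix.add_apply, diagonal_apply, SimpleGraph.adjMatrix_apply]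
  positivity

variable {G}

lemma qIndex_le_of_mulVec_le [Nonempty V] {w : V → ℝ} (hw : ∀ v, 0 < w v) {b : ℝ}
    (hb : ∀ u, (signlessLaplacian G *ᵥ w) u ≤ b * w u) : qIndex G ≤ b := by
  have hb₀ : 0 ≤ b := by
    obtain ⟨u⟩ := ‹Nonempty V›
    have hQw : 0 ≤ (signlessLaplacian G *ᵥ w) u :=
      dotProduct_nonneg_of_nonneg (signlessLaplacian_nonneg G u) fun v => (hw v).le
    exact nonneg_of_mul_nonneg_left (hQw.trans (hb u)) (hw u)
  refine Real.sSup_le ?_ hb₀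
  rintro μ ⟨x, hx, hμ⟩
  exact (le_abs_self μ).trans <|
    abs_eigenvalue_le_of_mulVec_le (signlessLaplacian_nonneg G) hw hb hx hμ

variable (G)

/-- The average degree `m u` of the neighbours of `u`; it is `0` if `u` is isolated. -/
noncomputable def avgNeighborDegree (u : V) : ℝ :=
  (∑ v ∈ G.neighborFinset u, (G.degree v : ℝ)) / G.degree u

variable {G}

omit [DecidableEq V] in
lemma avgNeighborDegree_nonneg (u : V) : 0 ≤ avgNeighborDegree G u := by
  unfold avgNeighborDegree
  positivity

lemma qIndex_le_of_degree_add_avgNeighborDegree_le [Nonempty V] {b : ℝ}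
    (hb : ∀ u, G.degree u + avgNeighborDegree G u ≤ b) : qIndex G ≤ b := by
  -- The weight of an isolated vertex is irrelevant, but it has to be positive.
  refine qIndex_le_of_mulVec_le (w := fun v => max (G.degree v : ℝ) 1) (fun v => by positivity)
    fun u => ?_
  rw [signlessLaplacian_mulVec_apply]
  have max_degree_of_adj {v w : V} (h : G.Adj v w) : max (G.degree v : ℝ) 1 = G.degree v :=
    max_eq_left (by exact_mod_cast h.degree_pos_left)
  rcases (G.neighborFinset u).eq_empty_or_nonempty with hN | ⟨v, hv⟩
  · have hu : G.degree u = 0 := by rw [← G.card_neighborFinset_eq_degree, hN, card_empty]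
    have hb₀ : 0 ≤ b :=
      (add_nonneg (Nat.cast_nonneg _) (avgNeighborDegree_nonneg u)).trans (hb u)
    simpa [hN, hu] using hb₀
  · rw [G.mem_neighborFinset] at hv
    have hu : (0 : ℝ) < G.degree u := by exact_mod_cast hv.degree_pos_left
    rw [max_degree_of_adj hv, sum_congr rfl fun w hw =>
      max_degree_of_adj ((G.mem_neighborFinset u w).1 hw).symm]
    calc (G.degree u : ℝ) * G.degree u + ∑ w ∈ G.neighborFinset u, (G.degree w : ℝ)
        = (G.degree u + avgNeighborDegree G u) * G.degree u := by
          rw [add_mul, avgNeighborDegree, div_mul_cancel₀ _ hu.ne']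
      _ ≤ b * G.degree u := by gcongr; exact hb u

end SignlessLaplacian

section NeighborDegrees

variable {V : Type*} [Fintype V] [DecidableEq V] (G : SimpleGraph V) [DecidableRel G.Adj]

lemma card_interedges_eq_sum_card_inter (s t : Finset V) :
    #(G.interedges s t) = ∑ v ∈ s, #(G.neighborFinset v ∩ t) := by
  simp only [SimpleGraph.interedges_def, card_filter, sum_product]
  refine sum_congr rfl fun v _ => ?_
  rw [← card_filter]
  congr 1
  ext w
  simp [and_comm]

omit [DecidableEq V] in
lemma card_interedges_le_sum_degree (s t : Finset V) :
    #(G.interedges s t) ≤ ∑ v ∈ t, G.degree v := by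
  classical
  have := G.symm
  calc #(G.interedges s t) = #(G.interedges t s) := Rel.card_interedges_comm s t
    _ = ∑ v ∈ t, #(G.neighborFinset v ∩ s) := card_interedges_eq_sum_card_inter G t s
    _ ≤ ∑ v ∈ t, G.degree v := sum_le_sum fun v _ => card_le_card inter_subset_left

variable {G} in
lemma degree_le_degree_add_card_inter {u v : V} (h : G.Adj u v) :
    G.degree v ≤ G.degree u + #(G.neighborFinset v ∩ Gᶜ.neighborFinset u) := by
  have hsub : G.neighborFinset v \ Gᶜ.neighborFinset u ⊆
      insert u ((G.neighborFinset u).erase v) := by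
    intro w
    simp only [mem_sdiff, SimpleGraph.mem_neighborFinset, SimpleGraph.compl_adj, mem_insert,
      mem_erase]
    rintro ⟨hvw, hw⟩
    have := hvw.ne'
    tauto
  have hcard : #(G.neighborFinset v \ Gᶜ.neighborFinset u) ≤ G.degree u := by
    calc #(G.neighborFinset v \ Gᶜ.neighborFinset u)
        ≤ #((G.neighborFinset u).erase v) + 1 := (card_le_card hsub).trans (card_insert_le _ _)
      _ = G.degree u := card_erase_add_one ((G.mem_neighborFinset u v).2 h)
  calc G.degree v
      = #(G.neighborFinset v \ Gᶜ.neighborFinset u)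
          + #(G.neighborFinset v ∩ Gᶜ.neighborFinset u) := (card_sdiff_add_card_inter _ _).symm
    _ ≤ G.degree u + #(G.neighborFinset v ∩ Gᶜ.neighborFinset u) := by gcongr

lemma sum_degree_neighborFinset_le (u : V) :
    ∑ v ∈ G.neighborFinset u, G.degree v ≤
      G.degree u ^ 2 + #(G.interedges (G.neighborFinset u) (Gᶜ.neighborFinset u)) := by
  calc ∑ v ∈ G.neighborFinset u, G.degree v
      ≤ ∑ v ∈ G.neighborFinset u,
          (G.degree u + #(G.neighborFinset v ∩ Gᶜ.neighborFinset u)) :=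
        sum_le_sum fun v hv =>
          degree_le_degree_add_card_inter ((G.mem_neighborFinset u v).1 hv)
    _ = G.degree u ^ 2 + #(G.interedges (G.neighborFinset u) (Gᶜ.neighborFinset u)) := by
        rw [sum_add_distrib, sum_const, smul_eq_mul, G.card_neighborFinset_eq_degree, ← sq,
          card_interedges_eq_sum_card_inter]

lemma add_mul_le_mul_add_sq {d k E : ℕ} (hE : E ≤ d * k) : (E + d) * k ≤ d * (E + k ^ 2) := by
  rcases d.eq_zero_or_pos with rfl | hd
  · simp_all
  rcases k with _ | k
  · simp
  calc (E + d) * (k + 1) = 1 * E + E * k + d * (k + 1) := by ring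
    _ ≤ d * E + d * (k + 1) * k + d * (k + 1) := by gcongr; exact hd
    _ = d * (E + (k + 1) ^ 2) := by ring

-- This is `d u + m u ≤ 2 e(G) / (n - 1) + n - 2`, cleared of denominators and subtractions.
lemma sum_degree_neighborFinset_add_degree_mul_le (u : V) :
    (∑ v ∈ G.neighborFinset u, G.degree v + G.degree u) * Gᶜ.degree u ≤
      G.degree u * (∑ w ∈ Gᶜ.neighborFinset u, G.degree w
        + (G.degree u + Gᶜ.degree u) * Gᶜ.degree u) := by
  have hS := sum_degree_neighborFinset_le G u
  have hT := card_interedges_le_sum_degree G (G.neighborFinset u) (Gᶜ.neighborFinset u)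
  have hE : #(G.interedges (G.neighborFinset u) (Gᶜ.neighborFinset u)) ≤
      G.degree u * Gᶜ.degree u := G.card_interedges_le_mul _ _
  set d := G.degree u
  set k := Gᶜ.degree u
  set E := #(G.interedges (G.neighborFinset u) (Gᶜ.neighborFinset u))
  set T := ∑ w ∈ Gᶜ.neighborFinset u, G.degree w
  calc (∑ v ∈ G.neighborFinset u, G.degree v + d) * k
      ≤ (d ^ 2 + E + d) * k := by gcongr
    _ = d ^ 2 * k + (E + d) * k := by ring
    _ ≤ d ^ 2 * k + d * (E + k ^ 2) := Nat.add_le_add_left (add_mul_le_mul_add_sq hE) _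
    _ ≤ d ^ 2 * k + d * (T + k ^ 2) := by gcongr
    _ = d * (T + (d + k) * k) := by ring

lemma add_sum_neighborFinset_add_sum_compl {M : Type*} [AddCommMonoid M] (f : V → M) (u : V) :
    f u + ∑ v ∈ G.neighborFinset u, f v + ∑ w ∈ Gᶜ.neighborFinset u, f w = ∑ v, f v := by
  rw [← sum_insert (G.notMem_neighborFinset_self u), ← sum_add_sum_compl]
  congr 2
  ext w
  simp [SimpleGraph.compl_adj, eq_comm]

lemma degree_add_degree_compl (u : V) : G.degree u + Gᶜ.degree u + 1 = Fintype.card V := by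
  have := G.degree_lt_card_verts u
  rw [G.degree_compl]
  omega

omit [DecidableEq V] in
lemma degree_add_avgNeighborDegree_le (hn : 2 ≤ Fintype.card V) (u : V) :
    G.degree u + avgNeighborDegree G u ≤
      2 * (#G.edgeFinset : ℝ) / ((Fintype.card V : ℝ) - 1) + (Fintype.card V : ℝ) - 2 := by
  classical
  have hcard := degree_add_degree_compl G u
  have hedges := (add_sum_neighborFinset_add_sum_compl G (fun v => G.degree v) u).trans
    G.sum_degrees_eq_twice_card_edges
  have hineq := sum_degree_neighborFinset_add_degree_mul_le G u
  have hm : 1 ≤ G.degree u + Gᶜ.degree u := by omega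
  rw [avgNeighborDegree, ← hcard]
  rify at hedges hineq hm ⊢
  rw [← hedges]
  set d := (G.degree u : ℝ)
  set k := (Gᶜ.degree u : ℝ)
  set S := ∑ v ∈ G.neighborFinset u, (G.degree v : ℝ)
  set T := ∑ w ∈ Gᶜ.neighborFinset u, (G.degree w : ℝ)
  have hm₀ : 0 < d + k := one_pos.trans_le hm
  have hR : 0 ≤ (S + T + (d + k - 1) * k) / (d + k) :=
    div_nonneg (add_nonneg (by positivity) (mul_nonneg (sub_nonneg.2 hm) (by positivity))) hm₀.le
  have hS : S ≤ (S + T + (d + k - 1) * k) / (d + k) * d := by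
    rw [div_mul_eq_mul_div, le_div_iff₀ hm₀]
    linarith
  calc d + S / d ≤ d + (S + T + (d + k - 1) * k) / (d + k) :=
        add_le_add_right (div_le_of_le_mul₀ (by positivity) hR hS) d
    _ = (d + S + T) / (d + k + 1 - 1) + (d + k + 1) - 2 := by
        rw [add_sub_cancel_right]
        field_simp
        ring

end NeighborDegrees

/-- **Lemma 2.2**: `q(G) ≤ 2e(G)/(n-1) + n - 2`. -/
theorem qIndex_le {V : Type*} [Fintype V] [DecidableEq V]
    (G : SimpleGraph V) [DecidableRel G.Adj] (hn : 2 ≤ Fintype.card V) :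
    qIndex G ≤ 2 * (G.edgeFinset.card : ℝ) / ((Fintype.card V : ℝ) - 1)
      + (Fintype.card V : ℝ) - 2 := by
  have : Nonempty V := Fintype.card_pos_iff.1 (by omega)
  exact qIndex_le_of_degree_add_avgNeighborDegree_le (degree_add_avgNeighborDegree_le G hn)
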